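/- (Appendix C, step 2: monotonicity of the angular cut-off.) Let n ≥ 2 and suppose Assumption A holds for the top-order coefficients. Let χ₁ ∈ C^∞(ℝ) satisfy χ₁(s) = 1 for s ≤ −1, χ₁(s) = 0 for s ≥ 0, 0 ≤ χ₁ ≤ 1, and χ₁' ≤ 0 on ℝ. Fix 0 < σ' < σ < 1 and define ζ₂(x,ξ) = χ₁((β(x,ξ) − σ)/(σ − σ')) for x ≠ 0, ξ ≠ 0. Then there exists R₀ > 0 such that for every (x,ξ) with |x| ≥ R₀ and ξ ≠ 0 one has {p₂, ζ₂}(x,ξ) ≤ 0. -/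

import Mathlib

/-!
Since `ζ₂ = χ₁((β - σ)/(σ - σ'))`, the chain rule gives
`{p₂, ζ₂} = χ₁'(s)/(σ - σ') · {p₂, β}` with `s = (β - σ)/(σ - σ')`.  The factor `χ₁'(s)` is
nonpositive and vanishes unless `s ∈ [-1, 0]`, that is, unless `β ∈ [σ', σ]`.  Hence it suffices
that `{p₂, β} ≥ 0` for large `|x|` wherever `β² ≤ σ² < 1`.

With `v = v(ξ)`, the free bracket is `{p₀, β} = v · ∂ₓβ = (|v|/|x|)(1 - β²)`, which is at least
`c (1 - σ²)|ξ|/|x|` because `g₀` is nondegenerate.  The decay of `g - g₀` and of its first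
derivatives, together with `∂ₓβ = O(1/|x|)` and `∂_ξβ = O(1/|ξ|)`, bounds the difference
`{p₂ - p₀, β}` by `M ⟨x⟩^{-μ}|ξ|/|x|`, so the free bracket dominates once `⟨x⟩^{-μ}` is small.

The function `cosA x w` is the cosine of the angle between `x` and `w`, so that
`β(x,ξ) = cosA x (v(ξ))`; it is symmetric, so both `∂ₓβ` and `∂_ξβ` come from the single derivative
`cosAD`.  The main estimate is `bracket_lower_bound`.
-/

open MeasureTheory Filter Topology

noncomputable section

/-- Euclidean norm of `x ∈ ℝⁿ`. -/
def nrm {n : ℕ} (x : Fin n → ℝ) : ℝ := Real.sqrt (∑ j, x j ^ 2)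

/-- Japanese bracket `⟨x⟩ = (1 + |x|²)^{1/2}`. -/
def jap {n : ℕ} (x : Fin n → ℝ) : ℝ := Real.sqrt (1 + ∑ j, x j ^ 2)

/-- Japanese bracket of a real number. -/
def japR (t : ℝ) : ℝ := Real.sqrt (1 + t ^ 2)

/-- Euclidean inner product on `ℝⁿ`. -/
def dotp {n : ℕ} (x y : Fin n → ℝ) : ℝ := ∑ j, x j * y j

/-- Partial derivative in the `j`-th coordinate direction. -/
def pd {n : ℕ} {F : Type} [NormedAddCommGroup F] [NormedSpace ℝ F]
    (j : Fin n) (f : (Fin n → ℝ) → F) (x : Fin n → ℝ) : F :=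
  fderiv ℝ f x (Pi.single j 1)

/-- Iterated partial derivatives along a list of coordinate indices
(encoding a multi-index). -/
def pdL {n : ℕ} {F : Type} [NormedAddCommGroup F] [NormedSpace ℝ F] :
    List (Fin n) → ((Fin n → ℝ) → F) → (Fin n → ℝ) → F
  | [], f => f
  | j :: L, f => pd j (pdL L f)

/-- `D_j = -i ∂_j`. -/
def Dop {n : ℕ} (j : Fin n) (φ : (Fin n → ℝ) → ℂ) (x : Fin n → ℝ) : ℂ :=
  -Complex.I * pd j φ x

/-- The Klein-Gordon type operator
`Pφ = Σ_{j,k} D_j(g^{jk} D_k φ) + (1/2) Σ_j (D_j(u_j φ) + u_j D_j φ) + u_0 φ`. -/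
def Pop {n : ℕ} (g : Fin n → Fin n → (Fin n → ℝ) → ℝ)
    (u : Fin (n + 1) → (Fin n → ℝ) → ℝ) (φ : (Fin n → ℝ) → ℂ) (x : Fin n → ℝ) : ℂ :=
  (∑ j, ∑ k, Dop j (fun y => (g j k y : ℂ) * Dop k φ y) x)
    + (1 / 2) * (∑ j, (Dop j (fun y => (u j.succ y : ℂ) * φ y) x
        + (u j.succ x : ℂ) * Dop j φ x))
    + (u 0 x : ℂ) * φ x

/-- The principal symbol `p₂(x,ξ) = Σ g^{jk}(x) ξ_j ξ_k`. -/
def p2 {n : ℕ} (g : Fin n → Fin n → (Fin n → ℝ) → ℝ) (x ξ : Fin n → ℝ) : ℝ :=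
  ∑ j, ∑ k, g j k x * ξ j * ξ k

/-- `v(ξ) = ∂_ξ p₀(ξ) = 2 g₀ ξ` for the constant cometric `g₀`. -/
def vv {n : ℕ} (g₀ : Fin n → Fin n → ℝ) (ξ : Fin n → ℝ) : Fin n → ℝ :=
  fun j => 2 * ∑ k, g₀ j k * ξ k

/-- `v̂(ξ) = v(ξ)/|v(ξ)|`. -/
def vhat {n : ℕ} (g₀ : Fin n → Fin n → ℝ) (ξ : Fin n → ℝ) : Fin n → ℝ :=
  (nrm (vv g₀ ξ))⁻¹ • vv g₀ ξ

/-- `β(x,ξ) = x̂ · v̂(ξ)`. -/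
def betaF {n : ℕ} (g₀ : Fin n → Fin n → ℝ) (x ξ : Fin n → ℝ) : ℝ :=
  dotp ((nrm x)⁻¹ • x) (vhat g₀ ξ)

/-- `x^⊥_ξ = x − (x·v̂(ξ)) v̂(ξ)`. -/
def perpx {n : ℕ} (g₀ : Fin n → Fin n → ℝ) (x ξ : Fin n → ℝ) : Fin n → ℝ :=
  x - dotp x (vhat g₀ ξ) • vhat g₀ ξ

/-- `τ(x,ξ) = c₀ √(|x|² − (x·v̂(ξ))²) − x·v̂(ξ)`. -/
def tauF {n : ℕ} (g₀ : Fin n → Fin n → ℝ) (c₀ : ℝ) (x ξ : Fin n → ℝ) : ℝ :=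
  c₀ * Real.sqrt (nrm x ^ 2 - dotp x (vhat g₀ ξ) ^ 2) - dotp x (vhat g₀ ξ)

/-- Partial derivative of a symbol in the `j`-th `x`-direction. -/
def pdx {n : ℕ} (j : Fin n) (a : (Fin n → ℝ) → (Fin n → ℝ) → ℝ) :
    (Fin n → ℝ) → (Fin n → ℝ) → ℝ :=
  fun x ξ => fderiv ℝ (fun y => a y ξ) x (Pi.single j 1)

/-- Partial derivative of a symbol in the `j`-th `ξ`-direction. -/
def pdxi {n : ℕ} (j : Fin n) (a : (Fin n → ℝ) → (Fin n → ℝ) → ℝ) :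
    (Fin n → ℝ) → (Fin n → ℝ) → ℝ :=
  fun x ξ => fderiv ℝ (fun ζ => a x ζ) ξ (Pi.single j 1)

/-- Iterated `x`-derivatives of a symbol. -/
def pdxL {n : ℕ} : List (Fin n) → ((Fin n → ℝ) → (Fin n → ℝ) → ℝ) →
    (Fin n → ℝ) → (Fin n → ℝ) → ℝ
  | [], a => a
  | j :: L, a => pdx j (pdxL L a)

/-- Iterated `ξ`-derivatives of a symbol. -/
def pdxiL {n : ℕ} : List (Fin n) → ((Fin n → ℝ) → (Fin n → ℝ) → ℝ) →
    (Fin n → ℝ) → (Fin n → ℝ) → ℝ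
  | [], a => a
  | j :: L, a => pdxi j (pdxiL L a)

/-- Poisson bracket `{a,b} = ∂_ξ a · ∂_x b − ∂_x a · ∂_ξ b`. -/
def PB {n : ℕ} (a b : (Fin n → ℝ) → (Fin n → ℝ) → ℝ) :
    (Fin n → ℝ) → (Fin n → ℝ) → ℝ :=
  fun x ξ => ∑ j, (pdxi j a x ξ * pdx j b x ξ - pdx j a x ξ * pdxi j b x ξ)

/-- The symbol class `S^{k,ℓ} = S(⟨x⟩^ℓ⟨ξ⟩^k, dx²/⟨x⟩² + dξ²/⟨ξ⟩²)`. -/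
def SymClass {n : ℕ} (k ℓ : ℝ) (a : (Fin n → ℝ) → (Fin n → ℝ) → ℝ) : Prop :=
  ContDiff ℝ (⊤ : ℕ∞) (fun p : (Fin n → ℝ) × (Fin n → ℝ) => a p.1 p.2) ∧
  ∀ Lx Lξ : List (Fin n), ∃ C > 0, ∀ x ξ,
    |pdxL Lx (pdxiL Lξ a) x ξ| ≤
      C * jap x ^ (ℓ - (Lx.length : ℝ)) * jap ξ ^ (k - (Lξ.length : ℝ))

/-- The incoming region `Γ₋(δ,σ,R)`. -/
def Gm {n : ℕ} (g₀ : Fin n → Fin n → ℝ) (δ σ R : ℝ) :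
    Set ((Fin n → ℝ) × (Fin n → ℝ)) :=
  {p | 1 - δ ≤ nrm p.2 ^ 2 ∧ nrm p.2 ^ 2 ≤ 1 + δ ∧ betaF g₀ p.1 p.2 ≤ σ ∧ R ≤ nrm p.1}

/-- The outgoing region `Γ₊(δ,σ,R)`. -/
def Gp {n : ℕ} (g₀ : Fin n → Fin n → ℝ) (δ σ R : ℝ) :
    Set ((Fin n → ℝ) × (Fin n → ℝ)) :=
  {p | 1 - δ ≤ nrm p.2 ^ 2 ∧ nrm p.2 ^ 2 ≤ 1 + δ ∧ σ ≤ betaF g₀ p.1 p.2 ∧ R ≤ nrm p.1}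

/-- Assumption A for the top-order coefficients `g^{jk}`: smooth, real-valued,
symmetric, everywhere nondegenerate, asymptotically flat with rate `⟨x⟩^{-μ-|α|}`
towards a constant nondegenerate symmetric matrix `g₀`. -/
structure AssumpG {n : ℕ} (g : Fin n → Fin n → (Fin n → ℝ) → ℝ)
    (g₀ : Fin n → Fin n → ℝ) (μ : ℝ) : Prop where
  smooth : ∀ j k, ContDiff ℝ (⊤ : ℕ∞) (g j k)
  symm : ∀ j k x, g j k x = g k j x
  nondeg : ∀ x (ξ : Fin n → ℝ), (∀ j, ∑ k, g j k x * ξ k = 0) → ξ = 0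
  symm0 : ∀ j k, g₀ j k = g₀ k j
  nondeg0 : ∀ ξ : Fin n → ℝ, (∀ j, ∑ k, g₀ j k * ξ k = 0) → ξ = 0
  decay : ∀ L : List (Fin n), ∃ C > 0, ∀ j k x,
    |pdL L (fun y => g j k y - g₀ j k) x| ≤ C * jap x ^ (-μ - (L.length : ℝ))

/-- Assumption A for the lower-order coefficients `u_j`, `j = 0,…,n`:
smooth, real-valued, with symbol-type decay `⟨x⟩^{-μ-|α|}`. -/
structure AssumpU {n : ℕ} (u : Fin (n + 1) → (Fin n → ℝ) → ℝ) (μ : ℝ) : Prop where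
  smooth : ∀ j, ContDiff ℝ (⊤ : ℕ∞) (u j)
  decay : ∀ L : List (Fin n), ∃ C > 0, ∀ j x,
    |pdL L (u j) x| ≤ C * jap x ^ (-μ - (L.length : ℝ))

/-- `∂_ξ p₂(x,ξ)` (the `x`-component of the Hamilton vector field). -/
def HamX {n : ℕ} (g : Fin n → Fin n → (Fin n → ℝ) → ℝ) (x ξ : Fin n → ℝ) :
    Fin n → ℝ :=
  fun j => fderiv ℝ (fun ζ => p2 g x ζ) ξ (Pi.single j 1)

/-- `−∂_x p₂(x,ξ)` (the `ξ`-component of the Hamilton vector field). -/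
def HamXi {n : ℕ} (g : Fin n → Fin n → (Fin n → ℝ) → ℝ) (x ξ : Fin n → ℝ) :
    Fin n → ℝ :=
  fun j => -(fderiv ℝ (fun y => p2 g y ξ) x (Pi.single j 1))

/-- Assumption B (null non-trapping): every null bicharacteristic with `ξ₀ ≠ 0`
is global and escapes to spatial infinity in both time directions. -/
def AssumptionB {n : ℕ} (g : Fin n → Fin n → (Fin n → ℝ) → ℝ) : Prop :=
  ∀ x₀ ξ₀ : Fin n → ℝ, p2 g x₀ ξ₀ = 0 → ξ₀ ≠ 0 →
    ∃ y η : ℝ → (Fin n → ℝ), y 0 = x₀ ∧ η 0 = ξ₀ ∧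
      (∀ t, HasDerivAt y (HamX g (y t) (η t)) t) ∧
      (∀ t, HasDerivAt η (HamXi g (y t) (η t)) t) ∧
      Tendsto (fun t => nrm (y t)) atTop atTop ∧
      Tendsto (fun t => nrm (y t)) atBot atTop

/-- A test function: smooth and compactly supported. -/
def IsTest {n : ℕ} (φ : (Fin n → ℝ) → ℂ) : Prop :=
  ContDiff ℝ (⊤ : ℕ∞) φ ∧ HasCompactSupport φ

end

noncomputable section

variable {n : ℕ}

/-! ### Euclidean inner product and norm -/

lemma nrm_nonneg (x : Fin n → ℝ) : 0 ≤ nrm x := Real.sqrt_nonneg _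

lemma sum_sq_nonneg (x : Fin n → ℝ) : 0 ≤ ∑ j, x j ^ 2 :=
  Finset.sum_nonneg fun _ _ => sq_nonneg _

lemma nrm_sq (x : Fin n → ℝ) : nrm x ^ 2 = ∑ j, x j ^ 2 := Real.sq_sqrt (sum_sq_nonneg x)

lemma dotp_self (x : Fin n → ℝ) : dotp x x = nrm x ^ 2 := by
  rw [nrm_sq]; simp [dotp, sq]

lemma dotp_comm (x y : Fin n → ℝ) : dotp x y = dotp y x := by
  simp [dotp, mul_comm]

lemma abs_dotp_le (x y : Fin n → ℝ) : |dotp x y| ≤ nrm x * nrm y := by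
  apply abs_le_of_sq_le_sq _ (mul_nonneg (nrm_nonneg x) (nrm_nonneg y))
  rw [mul_pow, nrm_sq, nrm_sq]
  exact Finset.sum_mul_sq_le_sq_mul_sq _ _ _

lemma abs_le_nrm (x : Fin n → ℝ) (j : Fin n) : |x j| ≤ nrm x := by
  apply Real.abs_le_sqrt
  exact Finset.single_le_sum (f := fun j => x j ^ 2) (fun _ _ => sq_nonneg _) (Finset.mem_univ j)

lemma norm_le_nrm (x : Fin n → ℝ) : ‖x‖ ≤ nrm x :=
  (pi_norm_le_iff_of_nonneg (nrm_nonneg x)).2 fun j => abs_le_nrm x j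

lemma nrm_pos {x : Fin n → ℝ} (hx : x ≠ 0) : 0 < nrm x :=
  (norm_pos_iff.2 hx).trans_le (norm_le_nrm x)

lemma nrm_single (j : Fin n) : nrm (Pi.single j (1 : ℝ)) = 1 := by
  have : ∑ i, (Pi.single j (1 : ℝ) : Fin n → ℝ) i ^ 2 = 1 := by
    rw [Finset.sum_eq_single j] <;> simp +contextual
  simp [nrm, this]

lemma nrm_le_jap (x : Fin n → ℝ) : nrm x ≤ jap x := Real.sqrt_le_sqrt (by linarith)

/-- The linear functional `h ↦ h · w`. -/
def dotpL (w : Fin n → ℝ) : (Fin n → ℝ) →L[ℝ] ℝ :=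
  ∑ j, w j • ContinuousLinearMap.proj (R := ℝ) (φ := fun _ : Fin n => ℝ) j

@[simp] lemma dotpL_apply (w h : Fin n → ℝ) : dotpL w h = dotp h w := by
  simp [dotpL, dotp, mul_comm]

lemma hasFDerivAt_nrm {x : Fin n → ℝ} (hx : x ≠ 0) :
    HasFDerivAt nrm ((nrm x)⁻¹ • dotpL x) x := by
  have hq : HasFDerivAt (fun y : Fin n → ℝ => ∑ j, y j ^ 2) ((2 : ℝ) • dotpL x) x := by
    have h1 : ∀ j ∈ (Finset.univ : Finset (Fin n)),
        HasFDerivAt (fun y : Fin n → ℝ => y j ^ 2)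
          ((2 * x j) • ContinuousLinearMap.proj (R := ℝ) (φ := fun _ : Fin n => ℝ) j) x := by
      intro j _
      have := (hasFDerivAt_apply (𝕜 := ℝ) j x).pow 2
      simpa using this
    have := HasFDerivAt.fun_sum h1
    refine this.congr_fderiv ?_
    simp only [dotpL, Finset.smul_sum, smul_smul]
  have hne : ∑ j, x j ^ 2 ≠ 0 := by
    rw [← nrm_sq]; exact pow_ne_zero _ (nrm_pos hx).ne'
  have := hq.sqrt hne
  refine this.congr_fderiv ?_
  rw [smul_smul]
  congr 1
  change 1 / (2 * nrm x) * 2 = (nrm x)⁻¹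
  have := (nrm_pos hx).ne'
  field_simp

/-! ### The cosine of the angle between two vectors -/

/-- The cosine of the angle between `x` and `w` (equal to `0` if one of them vanishes). -/
def cosA (x w : Fin n → ℝ) : ℝ := dotp x w * (nrm x)⁻¹ * (nrm w)⁻¹

/-- The derivative of `cosA` in its first argument, at `(x, w)`, as a linear functional. -/
def cosAD (x w : Fin n → ℝ) : (Fin n → ℝ) →L[ℝ] ℝ :=
  ((nrm x)⁻¹ * (nrm w)⁻¹) • dotpL w - (dotp x w * ((nrm x)⁻¹) ^ 3 * (nrm w)⁻¹) • dotpL x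

lemma cosA_comm (x w : Fin n → ℝ) : cosA x w = cosA w x := by
  simp only [cosA, dotp_comm x w]; ring

lemma hasFDerivAt_cosA {x : Fin n → ℝ} (hx : x ≠ 0) (w : Fin n → ℝ) :
    HasFDerivAt (fun y => cosA y w) (cosAD x w) x := by
  have h1 : HasFDerivAt (fun y => dotp y w) (dotpL w) x := by
    have := (dotpL w).hasFDerivAt (x := x)
    exact this.congr_of_eventuallyEq (Eventually.of_forall fun y => (dotpL_apply w y).symm)
  have hx' := (nrm_pos hx).ne'
  have h2 := (hasDerivAt_inv hx').comp_hasFDerivAt x (hasFDerivAt_nrm hx)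
  have h3 := (h1.mul h2).mul_const (nrm w)⁻¹
  refine h3.congr_fderiv ?_
  ext h
  simp [cosAD]
  field_simp
  ring

lemma cosAD_self {x w : Fin n → ℝ} (hx : x ≠ 0) (hw : w ≠ 0) :
    cosAD x w w = nrm w / nrm x * (1 - cosA x w ^ 2) := by
  have hx' := (nrm_pos hx).ne'
  have hw' := (nrm_pos hw).ne'
  simp [cosAD, dotp_self, cosA, dotp_comm w x]
  field_simp

lemma abs_cosAD_le {x w : Fin n → ℝ} (hx : x ≠ 0) (hw : w ≠ 0) (h : Fin n → ℝ) :
    |cosAD x w h| ≤ 2 * nrm h / nrm x := by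
  have hx' := nrm_pos hx
  have hw' := nrm_pos hw
  have e : cosAD x w h = (nrm x)⁻¹ * (nrm w)⁻¹ * dotp h w
      - dotp x w * ((nrm x)⁻¹) ^ 3 * (nrm w)⁻¹ * dotp h x := by simp [cosAD]
  rw [e]
  refine (abs_sub _ _).trans ?_
  have hi : 0 ≤ (nrm x)⁻¹ := by positivity
  have hj : 0 ≤ (nrm w)⁻¹ := by positivity
  rw [abs_mul, abs_mul, abs_mul, abs_mul, abs_mul, abs_pow, abs_of_nonneg hi, abs_of_nonneg hj]
  have t1 : (nrm x)⁻¹ * (nrm w)⁻¹ * |dotp h w| ≤ (nrm x)⁻¹ * (nrm w)⁻¹ * (nrm h * nrm w) := by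
    gcongr; exact abs_dotp_le _ _
  have t2 : |dotp x w| * (nrm x)⁻¹ ^ 3 * (nrm w)⁻¹ * |dotp h x|
      ≤ (nrm x * nrm w) * (nrm x)⁻¹ ^ 3 * (nrm w)⁻¹ * (nrm h * nrm x) := by
    have := nrm_nonneg h
    gcongr <;> exact abs_dotp_le _ _
  refine (add_le_add t1 t2).trans (le_of_eq ?_)
  field_simp
  ring

/-! ### The velocity map -/

/-- The linear map `ξ ↦ v(ξ) = 2 g₀ ξ`, bundled. -/
def vvL (g₀ : Fin n → Fin n → ℝ) : (Fin n → ℝ) →L[ℝ] (Fin n → ℝ) :=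
  ContinuousLinearMap.pi fun j => ∑ k, (2 * g₀ j k) •
    ContinuousLinearMap.proj (R := ℝ) (φ := fun _ : Fin n => ℝ) k

lemma vvL_apply (g₀ : Fin n → Fin n → ℝ) (ξ : Fin n → ℝ) : vvL g₀ ξ = vv g₀ ξ := by
  ext j
  simp [vvL, vv, Finset.mul_sum, mul_assoc]

/-- Nondegeneracy of `g₀` gives a quantitative lower bound on the velocity. -/
lemma exists_vv_lower {g₀ : Fin n → Fin n → ℝ}
    (h : ∀ ξ : Fin n → ℝ, (∀ j, ∑ k, g₀ j k * ξ k = 0) → ξ = 0) :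
    ∃ c > 0, ∀ ξ, c * ‖ξ‖ ≤ nrm (vv g₀ ξ) := by
  have hker : (vvL g₀ : (Fin n → ℝ) →ₗ[ℝ] (Fin n → ℝ)).ker = ⊥ := by
    rw [LinearMap.ker_eq_bot']
    intro ξ hξ
    apply h
    intro j
    have h1 : vv g₀ ξ = 0 := by rw [← vvL_apply]; exact hξ
    have := congrFun h1 j
    simpa [vv] using this
  obtain ⟨K, hK, hL⟩ := LinearMap.exists_antilipschitzWith _ hker
  have hK' : (0 : ℝ) < K := hK
  refine ⟨(K : ℝ)⁻¹, by positivity, fun ξ => ?_⟩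
  have h1 := hL.le_mul_dist ξ 0
  simp only [dist_zero_right, map_zero] at h1
  have h2 : ‖ξ‖ ≤ K * nrm (vv g₀ ξ) := by
    refine h1.trans ?_
    gcongr
    refine le_trans (le_of_eq ?_) (norm_le_nrm _)
    rw [← vvL_apply]; rfl
  rw [inv_mul_le_iff₀ hK']
  exact h2

lemma betaF_eq (g₀ : Fin n → Fin n → ℝ) (x ξ : Fin n → ℝ) :
    betaF g₀ x ξ = cosA x (vv g₀ ξ) := by
  simp only [betaF, vhat, cosA, dotp, Pi.smul_apply, smul_eq_mul, Finset.sum_mul]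
  refine Finset.sum_congr rfl fun j _ => ?_
  ring

lemma hasFDerivAt_betaF_xi {g₀ : Fin n → Fin n → ℝ} (x : Fin n → ℝ) {ξ : Fin n → ℝ}
    (hv : vv g₀ ξ ≠ 0) :
    HasFDerivAt (fun ζ => betaF g₀ x ζ) ((cosAD (vv g₀ ξ) x).comp (vvL g₀)) ξ := by
  have h1 : HasFDerivAt (fun ζ => vv g₀ ζ) (vvL g₀) ξ := by
    have := (vvL g₀).hasFDerivAt (x := ξ)
    simpa [vvL_apply] using this
  have h2 := (hasFDerivAt_cosA hv x).comp ξ h1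
  refine h2.congr_of_eventuallyEq (Eventually.of_forall fun ζ => ?_)
  simp [betaF_eq, cosA_comm x]

lemma hasFDerivAt_betaF_x (g₀ : Fin n → Fin n → ℝ) {x : Fin n → ℝ} (hx : x ≠ 0)
    (ξ : Fin n → ℝ) :
    HasFDerivAt (fun y => betaF g₀ y ξ) (cosAD x (vv g₀ ξ)) x := by
  simpa only [betaF_eq] using hasFDerivAt_cosA hx (vv g₀ ξ)

/-! ### Derivatives of the principal symbol -/

lemma pdx_p2 {g : Fin n → Fin n → (Fin n → ℝ) → ℝ} {g₀ : Fin n → Fin n → ℝ}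
    (hg : ∀ j k, ContDiff ℝ (⊤ : ℕ∞) (g j k)) (j : Fin n) (x ξ : Fin n → ℝ) :
    pdx j (p2 g) x ξ =
      ∑ k, ∑ l, pdL [j] (fun y => g k l y - g₀ k l) x * ξ k * ξ l := by
  have hd : ∀ k l, HasFDerivAt (g k l) (fderiv ℝ (g k l) x) x := fun k l =>
    ((hg k l).differentiable (by simp) x).hasFDerivAt
  have h : HasFDerivAt (fun y => p2 g y ξ)
      (∑ k, ∑ l, ξ l • ξ k • fderiv ℝ (g k l) x) x := by
    refine HasFDerivAt.fun_sum fun k _ => HasFDerivAt.fun_sum fun l _ => ?_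
    exact ((hd k l).mul_const (ξ k)).mul_const (ξ l)
  simp only [pdx, h.fderiv, sum_apply, smul_apply,
    smul_eq_mul, pdL, pd, fderiv_sub_const]
  refine Finset.sum_congr rfl fun k _ => Finset.sum_congr rfl fun l _ => ?_
  ring

lemma pdxi_p2 {g : Fin n → Fin n → (Fin n → ℝ) → ℝ} (g₀ : Fin n → Fin n → ℝ)
    (hs : ∀ j k x, g j k x = g k j x) (j : Fin n) (x ξ : Fin n → ℝ) :
    pdxi j (p2 g) x ξ = vv g₀ ξ j + 2 * ∑ k, (g j k x - g₀ j k) * ξ k := by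
  have h : HasFDerivAt (fun ζ => p2 g x ζ)
      (∑ k, ∑ l, ((g k l x * ξ k) • ContinuousLinearMap.proj (R := ℝ) (φ := fun _ : Fin n => ℝ) l
        + ξ l • g k l x • ContinuousLinearMap.proj (R := ℝ) (φ := fun _ : Fin n => ℝ) k)) ξ := by
    refine HasFDerivAt.fun_sum fun k _ => HasFDerivAt.fun_sum fun l _ => ?_
    exact ((hasFDerivAt_apply k ξ).const_mul (g k l x)).mul (hasFDerivAt_apply l ξ)
  simp only [pdxi, h.fderiv, sum_apply, smul_apply,
    add_apply, ContinuousLinearMap.proj_apply, smul_eq_mul, Pi.single_apply,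
    vv, mul_ite, mul_one, mul_zero, Finset.sum_add_distrib, Finset.sum_ite_eq', Finset.mem_univ,
    if_true]
  rw [Finset.sum_comm (f := fun k l => if k = j then ξ l * g k l x else 0)]
  simp only [Finset.sum_ite_eq', Finset.mem_univ, if_true, sub_mul, Finset.sum_sub_distrib]
  have : ∑ k, g k j x * ξ k = ∑ k, g j k x * ξ k :=
    Finset.sum_congr rfl fun k _ => by rw [hs]
  have h2 : ∑ k, ξ k * g j k x = ∑ k, g j k x * ξ k :=
    Finset.sum_congr rfl fun k _ => mul_comm _ _
  rw [this, h2]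
  ring

/-! ### The bracket -/

/-- The bracket `{p₂, β}`, with the derivatives of `β` (at `x ≠ 0`, `v(ξ) ≠ 0`) in closed
form. -/
def brk (g : Fin n → Fin n → (Fin n → ℝ) → ℝ) (g₀ : Fin n → Fin n → ℝ) (x ξ : Fin n → ℝ) : ℝ :=
  ∑ j, (pdxi j (p2 g) x ξ * cosAD x (vv g₀ ξ) (Pi.single j 1)
    - pdx j (p2 g) x ξ * cosAD (vv g₀ ξ) x (vv g₀ (Pi.single j 1)))

lemma PB_comp (g : Fin n → Fin n → (Fin n → ℝ) → ℝ) (g₀ : Fin n → Fin n → ℝ)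
    {χ : ℝ → ℝ} (hχ : Differentiable ℝ χ) (σ d : ℝ) {x ξ : Fin n → ℝ} (hx : x ≠ 0)
    (hv : vv g₀ ξ ≠ 0) :
    PB (p2 g) (fun y ζ => χ ((betaF g₀ y ζ - σ) / d)) x ξ
      = deriv χ ((betaF g₀ x ξ - σ) / d) / d * brk g g₀ x ξ := by
  set s := (betaF g₀ x ξ - σ) / d with hs
  have hχs : HasDerivAt χ (deriv χ s) s := (hχ s).hasDerivAt
  have h1 : HasFDerivAt (fun y => χ ((betaF g₀ y ξ - σ) / d))
      (deriv χ s • d⁻¹ • cosAD x (vv g₀ ξ)) x := by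
    have := ((hasFDerivAt_betaF_x g₀ hx ξ).sub_const σ).mul_const d⁻¹
    simp only [← div_eq_mul_inv] at this
    exact hχs.comp_hasFDerivAt x this
  have h2 : HasFDerivAt (fun ζ => χ ((betaF g₀ x ζ - σ) / d))
      (deriv χ s • d⁻¹ • (cosAD (vv g₀ ξ) x).comp (vvL g₀)) ξ := by
    have := ((hasFDerivAt_betaF_xi (g₀ := g₀) x hv).sub_const σ).mul_const d⁻¹
    simp only [← div_eq_mul_inv] at this
    exact hχs.comp_hasFDerivAt ξ this
  unfold PB brk
  rw [Finset.mul_sum]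
  refine Finset.sum_congr rfl fun j _ => ?_
  have e1 : pdx j (fun y ζ => χ ((betaF g₀ y ζ - σ) / d)) x ξ
      = deriv χ s * (d⁻¹ * cosAD x (vv g₀ ξ) (Pi.single j 1)) := by
    simp [pdx, h1.fderiv]
  have e2 : pdxi j (fun y ζ => χ ((betaF g₀ y ζ - σ) / d)) x ξ
      = deriv χ s * (d⁻¹ * cosAD (vv g₀ ξ) x (vv g₀ (Pi.single j 1))) := by
    simp [pdxi, h2.fderiv, vvL_apply]
  rw [e1, e2]
  ring

/-- `{p₂, β} = {p₀, β} + O(⟨x⟩^{-μ}|ξ|/|x|)`, where `{p₀, β} = (|v|/|x|)(1 - β²)`. -/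
lemma bracket_lower_bound {g : Fin n → Fin n → (Fin n → ℝ) → ℝ} {g₀ : Fin n → Fin n → ℝ}
    {μ : ℝ} (hg : AssumpG g g₀ μ) :
    ∃ M, 0 ≤ M ∧ ∀ x ξ : Fin n → ℝ, x ≠ 0 → ξ ≠ 0 → vv g₀ ξ ≠ 0 →
      nrm (vv g₀ ξ) / nrm x * (1 - betaF g₀ x ξ ^ 2) - M * jap x ^ (-μ) * ‖ξ‖ / nrm x
        ≤ brk g g₀ x ξ := by
  obtain ⟨c, hc, hlow⟩ := exists_vv_lower hg.nondeg0
  obtain ⟨C, hC, hd0⟩ := hg.decay []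
  choose D hD hd1 using fun j => hg.decay [j]
  refine ⟨∑ j, (4 * n * C + n ^ 2 * D j * (2 * nrm (vv g₀ (Pi.single j 1)) / c)),
    Finset.sum_nonneg fun j _ => ?_, fun x ξ hx hξ hv => ?_⟩
  · have := hD j
    have := nrm_nonneg (vv g₀ (Pi.single j 1))
    positivity
  have hx' := nrm_pos hx
  have hv' := nrm_pos hv
  have hξ' : 0 < ‖ξ‖ := norm_pos_iff.2 hξ
  have hξj : ∀ j, |ξ j| ≤ ‖ξ‖ := fun j => norm_le_pi_norm ξ j
  have hjap : 0 < jap x := hx'.trans_le (nrm_le_jap x)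
  set J := jap x ^ (-μ) with hJ
  have hJ0 : 0 < J := Real.rpow_pos_of_pos hjap _
  have hJ1 : jap x ^ (-μ - 1) ≤ J / nrm x := by
    rw [Real.rpow_sub_one hjap.ne']
    exact div_le_div_of_nonneg_left hJ0.le hx' (nrm_le_jap x)
  -- the contribution of `p₀` is the derivative of the angle along `v` itself
  have hmain : ∑ j, vv g₀ ξ j * cosAD x (vv g₀ ξ) (Pi.single j 1)
      = nrm (vv g₀ ξ) / nrm x * (1 - betaF g₀ x ξ ^ 2) := by
    rw [betaF_eq, ← cosAD_self hx hv]
    have hj : ∀ j, vv g₀ ξ j * cosAD x (vv g₀ ξ) (Pi.single j 1)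
        = cosAD x (vv g₀ ξ) (Pi.single j (vv g₀ ξ j)) := by
      intro j
      rw [← smul_eq_mul, ← map_smul, ← Pi.single_smul, smul_eq_mul, mul_one]
    simp only [hj]
    rw [← map_sum, Finset.univ_sum_single]
  have hbrk : brk g g₀ x ξ = nrm (vv g₀ ξ) / nrm x * (1 - betaF g₀ x ξ ^ 2)
      + ∑ j, ((2 * ∑ k, (g j k x - g₀ j k) * ξ k) * cosAD x (vv g₀ ξ) (Pi.single j 1)
        - pdx j (p2 g) x ξ * cosAD (vv g₀ ξ) x (vv g₀ (Pi.single j 1))) := by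
    rw [← hmain, ← Finset.sum_add_distrib]
    refine Finset.sum_congr rfl fun j _ => ?_
    rw [pdxi_p2 g₀ hg.symm]
    ring
  have hA : ∀ j, |2 * ∑ k, (g j k x - g₀ j k) * ξ k| ≤ 2 * (n * (C * J * ‖ξ‖)) := by
    intro j
    rw [abs_mul, abs_two]
    gcongr
    refine (Finset.abs_sum_le_sum_abs _ _).trans ?_
    have : ∀ k ∈ Finset.univ, |(g j k x - g₀ j k) * ξ k| ≤ C * J * ‖ξ‖ := by
      intro k _
      rw [abs_mul]
      have h0 := hd0 j k x
      simp only [pdL, List.length_nil, Nat.cast_zero, sub_zero] at h0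
      gcongr
      exact hξj k
    refine (Finset.sum_le_card_nsmul _ _ _ this).trans (le_of_eq ?_)
    simp
  have hB : ∀ j, |pdx j (p2 g) x ξ| ≤ n ^ 2 * (D j * (J / nrm x) * ‖ξ‖ * ‖ξ‖) := by
    intro j
    rw [pdx_p2 (g₀ := g₀) hg.smooth]
    have hDj := hD j
    have : ∀ k ∈ Finset.univ, |∑ l, pdL [j] (fun y => g k l y - g₀ k l) x * ξ k * ξ l|
        ≤ n * (D j * (J / nrm x) * ‖ξ‖ * ‖ξ‖) := by
      intro k _
      refine (Finset.abs_sum_le_sum_abs _ _).trans ?_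
      have : ∀ l ∈ Finset.univ, |pdL [j] (fun y => g k l y - g₀ k l) x * ξ k * ξ l|
          ≤ D j * (J / nrm x) * ‖ξ‖ * ‖ξ‖ := by
        intro l _
        have h1 := hd1 j k l x
        simp only [List.length_singleton, Nat.cast_one] at h1
        have h2 : |pdL [j] (fun y => g k l y - g₀ k l) x| ≤ D j * (J / nrm x) :=
          h1.trans (by gcongr)
        rw [abs_mul, abs_mul]
        gcongr
        · exact hξj k
        · exact hξj l
      refine (Finset.sum_le_card_nsmul _ _ _ this).trans (le_of_eq ?_)
      simp
    refine (Finset.abs_sum_le_sum_abs _ _).trans ?_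
    refine (Finset.sum_le_card_nsmul _ _ _ this).trans (le_of_eq ?_)
    simp only [Finset.card_univ, Fintype.card_fin, nsmul_eq_mul]
    ring
  have herr : |∑ j, ((2 * ∑ k, (g j k x - g₀ j k) * ξ k) * cosAD x (vv g₀ ξ) (Pi.single j 1)
        - pdx j (p2 g) x ξ * cosAD (vv g₀ ξ) x (vv g₀ (Pi.single j 1)))|
      ≤ (∑ j, (4 * n * C + n ^ 2 * D j * (2 * nrm (vv g₀ (Pi.single j 1)) / c)))
        * J * ‖ξ‖ / nrm x := by
    refine (Finset.abs_sum_le_sum_abs _ _).trans ?_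
    rw [Finset.sum_mul, Finset.sum_mul, Finset.sum_div]
    refine Finset.sum_le_sum fun j _ => (abs_sub _ _).trans ?_
    rw [abs_mul (2 * _), abs_mul (pdx _ _ _ _)]
    have hDj := hD j
    have hN := nrm_nonneg (vv g₀ (Pi.single j 1))
    have g1 : |cosAD x (vv g₀ ξ) (Pi.single j 1)| ≤ 2 / nrm x := by
      simpa [nrm_single] using abs_cosAD_le hx hv (Pi.single j 1)
    have g2 : |cosAD (vv g₀ ξ) x (vv g₀ (Pi.single j 1))|
        ≤ 2 * nrm (vv g₀ (Pi.single j 1)) / (c * ‖ξ‖) := by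
      refine (abs_cosAD_le hv hx _).trans ?_
      gcongr
      exact hlow ξ
    refine (add_le_add (mul_le_mul (hA j) g1 (abs_nonneg _) (by positivity))
      (mul_le_mul (hB j) g2 (abs_nonneg _) (by positivity))).trans (le_of_eq ?_)
    field_simp
    ring
  have := (abs_le.1 herr).1
  rw [hbrk]
  linarith

end

/-- Appendix C, step 2: monotonicity of the angular
cut-off. With `χ₁` as in the paper, `0 < σ' < σ < 1` and
`ζ₂(x,ξ) = χ₁((β(x,ξ) − σ)/(σ − σ'))`, there is `R₀ > 0` such that
`{p₂, ζ₂}(x,ξ) ≤ 0` for all `(x,ξ)` with `|x| ≥ R₀` and `ξ ≠ 0`. -/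
theorem stmt_15 {n : ℕ} (hn : 2 ≤ n)
    (g : Fin n → Fin n → (Fin n → ℝ) → ℝ) (g₀ : Fin n → Fin n → ℝ)
    (μ : ℝ) (hμ0 : 0 < μ) (hμ1 : μ < 1) (hg : AssumpG g g₀ μ)
    (χ₁ : ℝ → ℝ) (hχsm : ContDiff ℝ (⊤ : ℕ∞) χ₁)
    (hχ1 : ∀ s ≤ (-1 : ℝ), χ₁ s = 1) (hχ0 : ∀ s ≥ (0 : ℝ), χ₁ s = 0)
    (hχrange : ∀ s, χ₁ s ∈ Set.Icc (0 : ℝ) 1) (hχmono : ∀ s, deriv χ₁ s ≤ 0)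
    (σ σ' : ℝ) (hσ'0 : 0 < σ') (hσ'σ : σ' < σ) (hσ1 : σ < 1) :
    ∃ R₀ > (0 : ℝ), ∀ x ξ : Fin n → ℝ, R₀ ≤ nrm x → ξ ≠ 0 →
      PB (p2 g) (fun y ζ => χ₁ ((betaF g₀ y ζ - σ) / (σ - σ'))) x ξ ≤ 0 := by
  obtain ⟨c, hc, hlow⟩ := exists_vv_lower hg.nondeg0
  obtain ⟨M, hM, hbr⟩ := bracket_lower_bound hg
  have hσ2 : 0 < 1 - σ ^ 2 := by nlinarith
  have htend : Tendsto (fun t : ℝ => M * t ^ (-μ)) atTop (𝓝 0) := by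
    simpa using (tendsto_rpow_neg_atTop hμ0).const_mul M
  obtain ⟨R, hR⟩ := eventually_atTop.1
    (htend.eventually (gt_mem_nhds (show 0 < c * (1 - σ ^ 2) by positivity)))
  refine ⟨max R 1, by positivity, fun x ξ hxR hξ => ?_⟩
  have hx' : 0 < nrm x := lt_of_lt_of_le (by positivity) hxR
  have hx : x ≠ 0 := by
    rintro rfl
    simp [nrm] at hx'
  have hξ' : 0 < ‖ξ‖ := norm_pos_iff.2 hξ
  have hv' : 0 < nrm (vv g₀ ξ) := (mul_pos hc hξ').trans_le (hlow ξ)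
  have hv : vv g₀ ξ ≠ 0 := by
    intro h
    rw [h] at hv'
    simp [nrm] at hv'
  have hd : 0 < σ - σ' := sub_pos.2 hσ'σ
  rw [PB_comp g g₀ (hχsm.differentiable (by simp)) σ (σ - σ') hx hv]
  set s := (betaF g₀ x ξ - σ) / (σ - σ') with hs
  by_cases hsI : -1 ≤ s ∧ s ≤ 0
  · have hβ1 : σ' ≤ betaF g₀ x ξ := by
      have := hsI.1
      rw [hs, le_div_iff₀ hd] at this
      linarith
    have hβ2 : betaF g₀ x ξ ≤ σ := by
      have := hsI.2
      rw [hs, div_le_iff₀ hd] at this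
      linarith
    have hβ : 1 - σ ^ 2 ≤ 1 - betaF g₀ x ξ ^ 2 := by nlinarith
    have hJ := hR (jap x) ((le_max_left R 1).trans (hxR.trans (nrm_le_jap x)))
    have hpos : 0 ≤ brk g g₀ x ξ := by
      refine le_trans ?_ (hbr x ξ hx hξ hv)
      have h1 : c * ‖ξ‖ * (1 - σ ^ 2) ≤ nrm (vv g₀ ξ) * (1 - betaF g₀ x ξ ^ 2) :=
        mul_le_mul (hlow ξ) hβ hσ2.le hv'.le
      have h2 : M * jap x ^ (-μ) * ‖ξ‖ ≤ c * (1 - σ ^ 2) * ‖ξ‖ := by gcongr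
      rw [div_mul_eq_mul_div, ← sub_div]
      apply div_nonneg _ hx'.le
      linarith
    exact mul_nonpos_of_nonpos_of_nonneg (div_nonpos_of_nonpos_of_nonneg (hχmono s) hd.le) hpos
  -- outside `[-1, 0]` the cut-off is locally constant
  · have h0 : deriv χ₁ s = 0 := by
      rcases lt_or_ge s (-1) with h | h
      · have : χ₁ =ᶠ[𝓝 s] fun _ => 1 := by
          filter_upwards [gt_mem_nhds h] with t ht using hχ1 t ht.le
        rw [this.deriv_eq, deriv_const]
      · have h' : 0 < s := by
          by_contra hcon
          exact hsI ⟨h, not_lt.1 hcon⟩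
        have : χ₁ =ᶠ[𝓝 s] fun _ => 0 := by
          filter_upwards [lt_mem_nhds h'] with t ht using hχ0 t ht.le
        rw [this.deriv_eq, deriv_const]
    simp [h0]
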